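/- Let ε₀ > 0, κ_u, κ_v, κ_w > 0 and σ_u, σ_v, σ_w ≥ 0 be real numbers, and define the PML update coefficients a = κ_v κ_w / κ_u, b = (σ_v κ_w + σ_w κ_v − a σ_u)/(κ_u ε₀), c = σ_v σ_w / ε₀² − b σ_u / ε₀, and d = σ_u/(κ_u ε₀). Let s ∈ ℂ with s ≠ 0 and s ≠ −d, and define the stretching variables s_u = κ_u + σ_u/(s ε₀), s_v = κ_v + σ_v/(s ε₀), s_w = κ_w + σ_w/(s ε₀). Suppose ĥ, p̂, f̂ ∈ ℂ are such that the functions h(t) = ĥ e^{st} and p(t) = p̂ e^{st} satisfy, for all t ∈ ℝ, the time-domain update equations a h′(t) = f̂ e^{st} − b h(t) − c p(t) and p′(t) = κ_u⁻¹ h(t) − d p(t). Then f̂ = s · (s_v s_w / s_u) · ĥ. -/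

import Mathlib

open Complex

/-!
With `S_u = s s_u = κ_u s + σ_u / ε₀`, the coefficients `a`, `b`, `c` come from dividing the
polynomial `S_v S_w` in `s` by `S_u`: the quotient is `a s + b` and the remainder is `c`. On
time-harmonic fields `d/dt` acts as multiplication by `s`. Since `S_u = κ_u (s + d)`, the second
update reads `p = h / S_u`, and the first then becomes
`f = (a s + b + c / S_u) h = (S_v S_w / S_u) h`.
-/

section StretchFactor

variable {K : Type*} [Field K] {ε₀ s : K}

/-- The coordinate-stretching variable `κ + σ / (s ε₀)` of a perfectly matched layer, at the
complex frequency `s` (which is `jω` for real frequencies `ω`). -/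
def stretchFactor (ε₀ κ σ s : K) : K := κ + σ / (s * ε₀)

lemma mul_stretchFactor (hs : s ≠ 0) (κ σ : K) :
    s * stretchFactor ε₀ κ σ s = κ * s + σ / ε₀ := by
  rw [stretchFactor, mul_add, mul_comm s κ, ← mul_div_assoc, mul_div_mul_left _ _ hs]

lemma mul_stretchFactor_eq_mul_add {κ : K} (hs : s ≠ 0) (hκ : κ ≠ 0) (σ : K) :
    s * stretchFactor ε₀ κ σ s = κ * (s + σ / (κ * ε₀)) := by
  rw [mul_stretchFactor hs, mul_add, ← mul_div_assoc, mul_div_mul_left _ _ hκ]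

lemma stretchFactor_ne_zero {κ σ : K} (hs : s ≠ 0) (hκ : κ ≠ 0) (hpole : s ≠ -(σ / (κ * ε₀))) :
    stretchFactor ε₀ κ σ s ≠ 0 := by
  have hfactor : s + σ / (κ * ε₀) ≠ 0 := mt eq_neg_of_add_eq_zero_left hpole
  exact right_ne_zero_of_mul (mul_stretchFactor_eq_mul_add hs hκ σ ▸ mul_ne_zero hκ hfactor)

lemma quotient_mul_stretchFactor_add_remainder {κu κv κw σu σv σw a b c : K}
    (hκu : κu ≠ 0) (hs : s ≠ 0)
    (ha : a = κv * κw / κu)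
    (hb : b = (σv * κw + σw * κv - a * σu) / (κu * ε₀))
    (hc : c = σv * σw / ε₀ ^ 2 - b * σu / ε₀) :
    (a * s + b) * (s * stretchFactor ε₀ κu σu s) + c =
      (s * stretchFactor ε₀ κv σv s) * (s * stretchFactor ε₀ κw σw s) := by
  have quadratic_coeff : a * κu = κv * κw := by rw [ha, div_mul_cancel₀ _ hκu]
  have linear_coeff : b * κu + a * σu / ε₀ = (σv * κw + σw * κv) / ε₀ := by
    rw [hb]
    field_simp
    ring
  simp only [mul_stretchFactor hs]
  linear_combination s ^ 2 * quadratic_coeff + s * linear_coeff + hc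

lemma quotient_add_remainder_div_stretchFactor {κu κv κw σu σv σw a b c : K}
    (hκu : κu ≠ 0) (hs : s ≠ 0) (hsu : stretchFactor ε₀ κu σu s ≠ 0)
    (ha : a = κv * κw / κu)
    (hb : b = (σv * κw + σw * κv - a * σu) / (κu * ε₀))
    (hc : c = σv * σw / ε₀ ^ 2 - b * σu / ε₀) :
    a * s + b + c / (s * stretchFactor ε₀ κu σu s) =
      s * (stretchFactor ε₀ κv σv s * stretchFactor ε₀ κw σw s / stretchFactor ε₀ κu σu s) := by
  have division := quotient_mul_stretchFactor_add_remainder hκu hs ha hb hc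
  field_simp
  linear_combination division

end StretchFactor

lemma deriv_eq_mul_of_eq_mul_cexp {A s : ℂ} {g : ℝ → ℂ}
    (hg : ∀ t : ℝ, g t = A * exp (s * t)) (t : ℝ) :
    deriv g t = s * g t := by
  have hderiv : HasDerivAt g (A * (exp (s * t) * (s * 1))) t :=
    funext hg ▸ ((hasDerivAt_id t).ofReal_comp.const_mul s).cexp.const_mul A
  rw [hderiv.deriv, hg]
  ring

theorem pml_time_harmonic_equivalence_general
    {ε₀ κu κv κw σu σv σw a b c d s hHat pHat fHat : ℂ} {h p : ℝ → ℂ}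
    (hε₀ : ε₀ ≠ 0) (hκu : κu ≠ 0)
    (ha : a = κv * κw / κu)
    (hb : b = (σv * κw + σw * κv - a * σu) / (κu * ε₀))
    (hc : c = σv * σw / ε₀ ^ 2 - b * σu / ε₀)
    (hd : d = σu / (κu * ε₀))
    (hs : s ≠ 0) (hsd : s ≠ -d)
    (hh : ∀ t : ℝ, h t = hHat * exp (s * t))
    (hp : ∀ t : ℝ, p t = pHat * exp (s * t)) (t : ℝ) :
    (a * deriv h t = fHat * exp (s * t) - b * h t - c * p t ∧
        deriv p t = κu⁻¹ * h t - d * p t) ↔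
      fHat = s * (stretchFactor ε₀ κv σv s * stretchFactor ε₀ κw σw s /
          stretchFactor ε₀ κu σu s) * hHat ∧
        pHat = hHat / (s * stretchFactor ε₀ κu σu s) := by
  have hsu : stretchFactor ε₀ κu σu s ≠ 0 := stretchFactor_ne_zero hs hκu (hd ▸ hsd)
  have hexp : exp (s * t) ≠ 0 := exp_ne_zero _
  have auxiliary : deriv p t = κu⁻¹ * h t - d * p t ↔
      pHat = hHat / (s * stretchFactor ε₀ κu σu s) := by
    rw [deriv_eq_mul_of_eq_mul_cexp hp, hh, hp, eq_div_iff (mul_ne_zero hs hsu),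
      mul_stretchFactor_eq_mul_add hs hκu, ← hd]
    refine ⟨fun hupdate => mul_right_cancel₀ hexp ?_, fun hamplitude => ?_⟩
    · field_simp at hupdate
      linear_combination exp (s * t) * hupdate
    · rw [← hamplitude]
      field_simp
      ring
  rw [auxiliary, and_congr_left_iff]
  intro hpHat
  rw [deriv_eq_mul_of_eq_mul_cexp hh, hh, hp, hpHat,
    ← quotient_add_remainder_div_stretchFactor hκu hs hsu ha hb hc]
  refine ⟨fun hupdate => mul_right_cancel₀ hexp ?_, fun hamplitude => ?_⟩
  · linear_combination -hupdate
  · linear_combination -exp (s * t) * hamplitude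

/-- For time-harmonic fields, the auxiliary-variable time-domain PML update pair
is equivalent to multiplication by the frequency-domain stretched-coordinate
factor `s · s_v s_w / s_u`. -/
theorem pml_time_harmonic_equivalence
    (ε₀ κu κv κw σu σv σw : ℝ)
    (hε₀ : 0 < ε₀) (hκu : 0 < κu) (hκv : 0 < κv) (hκw : 0 < κw)
    (hσu : 0 ≤ σu) (hσv : 0 ≤ σv) (hσw : 0 ≤ σw)
    (a b c d : ℝ)
    (ha : a = κv * κw / κu)
    (hb : b = (σv * κw + σw * κv - a * σu) / (κu * ε₀))
    (hc : c = σv * σw / ε₀ ^ 2 - b * σu / ε₀)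
    (hd : d = σu / (κu * ε₀))
    (s : ℂ) (hs : s ≠ 0) (hsd : s ≠ -(d : ℂ))
    (su sv sw : ℂ)
    (hsu : su = (κu : ℂ) + (σu : ℂ) / (s * (ε₀ : ℂ)))
    (hsv : sv = (κv : ℂ) + (σv : ℂ) / (s * (ε₀ : ℂ)))
    (hsw : sw = (κw : ℂ) + (σw : ℂ) / (s * (ε₀ : ℂ)))
    (hHat pHat fHat : ℂ)
    (h p : ℝ → ℂ)
    (hh : ∀ t : ℝ, h t = hHat * Complex.exp (s * t))
    (hpdef : ∀ t : ℝ, p t = pHat * Complex.exp (s * t))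
    (hupH : ∀ t : ℝ,
      (a : ℂ) * deriv h t = fHat * Complex.exp (s * t) - (b : ℂ) * h t - (c : ℂ) * p t)
    (hupP : ∀ t : ℝ, deriv p t = (κu : ℂ)⁻¹ * h t - (d : ℂ) * p t) :
    fHat = s * (sv * sw / su) * hHat := by
  subst hsu hsv hsw
  exact ((pml_time_harmonic_equivalence_general (mod_cast hε₀.ne') (mod_cast hκu.ne') (mod_cast ha)
    (mod_cast hb) (mod_cast hc) (mod_cast hd) hs hsd hh hpdef 0).mp ⟨hupH 0, hupP 0⟩).1
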